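/- Fix θ ∈ [0, π/2]. For finite families of unit vectors u_1,…,u_M and v_1,…,v_N in ℝ³, let P[u,v] be the behaviour P(a,b|x,y) = (1/4)·(1 + a·cosθ·(u_x)_3 + b·cosθ·(v_y)_3 + a·b·[(u_x)_3·(v_y)_3 + sinθ·((u_x)_1·(v_y)_1 − (u_x)_2·(v_y)_2)]), and let μ(u,v) denote the supremum of p ∈ [0,1] such that P[u,v] = p·P_L + (1−p)·Q pointwise for some behaviour P_L admitting an LHV+FHV model and some behaviour Q. Then the infimum of μ(u,v) over all M, N and all choices of unit vectors u_1,…,u_M, v_1,…,v_N equals cos θ. -/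

import Mathlib

/-!
Write `c = cos θ` and `s = sin θ`.

*The fraction is at least `c`* (`exists_local_part`). Let the hidden variable be a point `z` of the
plane with the rotation-invariant density `π⁻¹ (1 + |z|²)⁻²`. The first party answers with the
sign of the affine function `u₃ + u₁ Re z + u₂ Im z`; the second one answers with mean `ℓ / c` truncated to
`[-1, 1]`, where `ℓ = v₃ + s (v₁ Re z - v₂ Im z)`. An affine function of `z` becomes, after a rotation,
an affine function of `Re z`, whose law has density `(1 + x²)^(-3/2) / 2`; so all the moments needed
are elementary (`plane_sg`, `plane_pos`). They show that the marginals are `u₃` and `v₃`, and that the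
correlator `E_L` satisfies `|E - c E_L| ≤ 1 - c` with `E` the quantum correlator, because the two
truncated tails of `ℓ` have total mass `1 - c`. Hence `c * P_L ≤ P` pointwise, and the remainder,
rescaled, is a behaviour (`exists_complement`).

*The fraction is at most `c` in the infimum.* In a local-free behaviour the probability of unequal
outcomes obeys the triangle inequality (`LocalFree.diffProb_le`). Along a chain of directions on a
meridian, measured alternately by the two parties and going from pole to pole, the outcomes at the
two ends are always unequal, so the weight `p` is at most the sum over the steps of the quantum
probabilities of unequal outcomes (`chain_bound`). For the directions with stereographic parameter
`t` in geometric progression of ratio `r`, this sum telescopes up to polar terms that vanish as the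
chain gets longer, and is at most `(r² + 1 - 2 r s) / (r² - 1)` in the limit (`chain_cost`). The choice
`r = (1 + c) / s` gives `c`; when `c = 0` one lets `r` tend to `1`, and when `s = 0` there is nothing to
prove.
-/

open scoped BigOperators Classical
open Finset

noncomputable section

/-- The real value `±1` associated with a Boolean outcome. -/
def outVal (a : Bool) : ℝ := if a then 1 else -1

/-- A behaviour: nonnegative probabilities summing to one for every pair of settings. -/
def IsBehaviour {M N : ℕ} (P : Bool → Bool → Fin M → Fin N → ℝ) : Prop :=
  (∀ a b x y, 0 ≤ P a b x y) ∧ (∀ x y, ∑ a, ∑ b, P a b x y = 1)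

/-- A behaviour admits an LHV+FHV model (is local-free). -/
def LocalFree {M N : ℕ} (P : Bool → Bool → Fin M → Fin N → ℝ) : Prop :=
  ∃ (n : ℕ) (q : Fin n → ℝ) (A : Bool → Fin M → Fin n → ℝ) (B : Bool → Fin N → Fin n → ℝ),
    (∀ l, 0 ≤ q l) ∧ (∑ l, q l = 1) ∧
    (∀ a x l, 0 ≤ A a x l) ∧ (∀ x l, ∑ a, A a x l = 1) ∧
    (∀ b y l, 0 ≤ B b y l) ∧ (∀ y l, ∑ b, B b y l = 1) ∧
    (∀ a b x y, P a b x y = ∑ l, q l * A a x l * B b y l)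

/-- The quantum behaviour of the pure two-qubit state `cos(θ/2)|00⟩ + sin(θ/2)|11⟩`
under projective spin measurements along unit vectors `u x` and `v y`. -/
def qBehaviour {M N : ℕ} (θ : ℝ) (u : Fin M → EuclideanSpace ℝ (Fin 3))
    (v : Fin N → EuclideanSpace ℝ (Fin 3)) : Bool → Bool → Fin M → Fin N → ℝ :=
  fun a b x y => (1 / 4) *
    (1 + outVal a * Real.cos θ * u x 2 + outVal b * Real.cos θ * v y 2 +
      outVal a * outVal b *
        (u x 2 * v y 2 + Real.sin θ * (u x 0 * v y 0 - u x 1 * v y 1)))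


open MeasureTheory

/-! ### The hidden-variable distribution -/

/-- The density `(1 + x²)^(-3/2) / 2` on the line, with `(1 + x²)^(-1/2)` written as
`cos (arctan x)` so that its antiderivatives are visible. -/
def lineDens (x : ℝ) : ℝ := (1 / 2) * Real.cos (Real.arctan x) * (1 + x ^ 2)⁻¹

/-- The rotation-invariant density `π⁻¹ (1 + |z|²)⁻²` on the plane. -/
def planeDens (z : ℂ) : ℝ := Real.pi⁻¹ * ((1 + z.re ^ 2 + z.im ^ 2) ^ 2)⁻¹

/-- The law of the real part of the hidden variable; see `map_re_planeMeasure`. -/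
def lineMeasure : Measure ℝ := volume.withDensity (fun x => ENNReal.ofReal (lineDens x))

/-- The law of the hidden variable. -/
def planeMeasure : Measure ℂ := volume.withDensity (fun z => ENNReal.ofReal (planeDens z))

lemma lineDens_nonneg (x : ℝ) : 0 ≤ lineDens x := by
  have := (Real.cos_arctan_pos x).le
  unfold lineDens; positivity

lemma planeDens_nonneg (z : ℂ) : 0 ≤ planeDens z := by
  unfold planeDens; positivity

lemma continuous_lineDens : Continuous lineDens := by
  unfold lineDens
  refine ((continuous_const.mul (Real.continuous_cos.comp Real.continuous_arctan)).mul
    (Continuous.inv₀ (by fun_prop) (fun x => by positivity)))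

lemma continuous_planeDens : Continuous planeDens := by
  unfold planeDens
  refine continuous_const.mul (Continuous.inv₀ ?_ (fun x => by positivity))
  have := Complex.continuous_re
  have := Complex.continuous_im
  fun_prop

lemma integrable_lineDens_mul {g : ℝ → ℝ} (hg : Measurable g)
    (hb : ∀ x, |lineDens x * g x| ≤ (1 + x ^ 2)⁻¹) :
    Integrable (fun x => lineDens x * g x) := by
  refine integrable_inv_one_add_sq.mono'
    (continuous_lineDens.measurable.mul hg).aestronglyMeasurable ?_
  exact Filter.Eventually.of_forall hb

lemma integrable_lineDens : Integrable lineDens := by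
  have := integrable_lineDens_mul (g := fun _ => 1) measurable_const (fun x => by
    rw [mul_one, abs_of_nonneg (lineDens_nonneg x)]
    have h1 := Real.cos_le_one (Real.arctan x)
    have h2 : 0 ≤ (1 + x ^ 2)⁻¹ := by positivity
    unfold lineDens
    nlinarith)
  simpa using this

lemma mul_cos_arctan (x : ℝ) : x * Real.cos (Real.arctan x) = Real.sin (Real.arctan x) := by
  rw [Real.sin_arctan, Real.cos_arctan]; ring

lemma integral_lineDens_Ioi (h : ℝ) :
    ∫ x in Set.Ioi h, lineDens x = (1 / 2) * (1 - Real.sin (Real.arctan h)) := by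
  have hd : ∀ x ∈ Set.Ici h,
      HasDerivAt (fun x => (1 / 2) * Real.sin (Real.arctan x)) (lineDens x) x := by
    intro x _
    have := ((Real.hasDerivAt_arctan x).sin).const_mul (1 / 2)
    refine this.congr_deriv ?_
    unfold lineDens; ring
  have ht : Filter.Tendsto (fun x => (1 / 2) * Real.sin (Real.arctan x)) Filter.atTop
      (nhds ((1 / 2) * Real.sin (Real.pi / 2))) :=
    ((Real.continuous_sin.tendsto _).comp
      (tendsto_nhds_of_tendsto_nhdsWithin Real.tendsto_arctan_atTop)).const_mul _
  rw [integral_Ioi_of_hasDerivAt_of_tendsto' hd integrable_lineDens.integrableOn ht,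
    Real.sin_pi_div_two]
  ring

lemma abs_lineDens_mul_id (x : ℝ) : |lineDens x * x| ≤ (1 + x ^ 2)⁻¹ := by
  have h2 : 0 ≤ (1 + x ^ 2)⁻¹ := by positivity
  have : lineDens x * x = (1 / 2) * Real.sin (Real.arctan x) * (1 + x ^ 2)⁻¹ := by
    rw [← mul_cos_arctan]; unfold lineDens; ring
  rw [this, abs_mul, abs_mul, abs_of_nonneg h2]
  have := Real.abs_sin_le_one (Real.arctan x)
  rw [abs_of_pos (by norm_num : (0 : ℝ) < 1 / 2)]
  nlinarith

lemma integral_lineDens_mul_Ioi (h : ℝ) :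
    ∫ x in Set.Ioi h, lineDens x * x = (1 / 2) * Real.cos (Real.arctan h) := by
  have hd : ∀ x ∈ Set.Ici h,
      HasDerivAt (fun x => -(1 / 2) * Real.cos (Real.arctan x)) (lineDens x * x) x := by
    intro x _
    have := ((Real.hasDerivAt_arctan x).cos).const_mul (-(1 / 2))
    refine this.congr_deriv ?_
    rw [← mul_cos_arctan]
    unfold lineDens; ring
  have hi : IntegrableOn (fun x => lineDens x * x) (Set.Ioi h) :=
    (integrable_lineDens_mul measurable_id abs_lineDens_mul_id).integrableOn
  have ht : Filter.Tendsto (fun x => -(1 / 2) * Real.cos (Real.arctan x)) Filter.atTop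
      (nhds (-(1 / 2) * Real.cos (Real.pi / 2))) :=
    ((Real.continuous_cos.tendsto _).comp
      (tendsto_nhds_of_tendsto_nhdsWithin Real.tendsto_arctan_atTop)).const_mul _
  rw [integral_Ioi_of_hasDerivAt_of_tendsto' hd hi ht, Real.cos_pi_div_two]
  ring

lemma integrable_planeSlice (x : ℝ) :
    Integrable (fun y : ℝ => Real.pi⁻¹ * ((1 + x ^ 2 + y ^ 2) ^ 2)⁻¹) := by
  refine Integrable.const_mul ?_ _
  refine integrable_inv_one_add_sq.mono' ?_ ?_
  · refine (Continuous.inv₀ (by fun_prop) (fun x => by positivity)).aestronglyMeasurable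
  · refine Filter.Eventually.of_forall fun y => ?_
    rw [Real.norm_of_nonneg (by positivity)]
    apply inv_anti₀ (by positivity)
    nlinarith [sq_nonneg x, sq_nonneg y, mul_nonneg (sq_nonneg x) (sq_nonneg y)]

/-- Integrating out the imaginary part of `planeDens` leaves `lineDens`. -/
lemma integral_planeSlice (x : ℝ) :
    ∫ y : ℝ, Real.pi⁻¹ * ((1 + x ^ 2 + y ^ 2) ^ 2)⁻¹ = lineDens x := by
  set a := √(1 + x ^ 2) with ha
  have ha0 : 0 < a := by rw [ha]; positivity
  have ha2 : a ^ 2 = 1 + x ^ 2 := Real.sq_sqrt (by positivity)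
  -- the antiderivative of `π⁻¹ (a² + y²)⁻²`, with the bounded rational part in trigonometric form
  let G : ℝ → ℝ := fun y => Real.pi⁻¹ * (1 / (2 * a ^ 3)) *
    (Real.arctan (y / a) + Real.sin (Real.arctan (y / a)) * Real.cos (Real.arctan (y / a)))
  have hd : ∀ y, HasDerivAt G (Real.pi⁻¹ * ((1 + x ^ 2 + y ^ 2) ^ 2)⁻¹) y := by
    intro y
    have h0 : HasDerivAt (fun y => y / a) (1 / a) y := (hasDerivAt_id y).div_const a
    have h1 := h0.arctan
    have h2 := (h1.add (h1.sin.mul h1.cos)).const_mul (Real.pi⁻¹ * (1 / (2 * a ^ 3)))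
    refine h2.congr_deriv ?_
    have hs := Real.sin_sq_arctan (y / a)
    have hc := Real.cos_sq_arctan (y / a)
    rw [← ha2]
    have e : ∀ S C D : ℝ, D + (C * D * C + S * (-S * D)) = D * (1 + C ^ 2 - S ^ 2) := by
      intros; ring
    rw [e, hs, hc]
    have : a ^ 2 + y ^ 2 ≠ 0 := by positivity
    have hpi := Real.pi_ne_zero
    field_simp
    ring
  have key : ∀ (l : Filter ℝ) (t : ℝ),
      Filter.Tendsto (fun y => Real.arctan (y / a)) l (nhds t) →
      Filter.Tendsto G l (nhds (Real.pi⁻¹ * (1 / (2 * a ^ 3)) * (t + Real.sin t * Real.cos t))) := by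
    intro l t ht
    exact (ht.add (((Real.continuous_sin.tendsto _).comp ht).mul
      ((Real.continuous_cos.tendsto _).comp ht))).const_mul _
  have htop := key Filter.atTop _ ((tendsto_nhds_of_tendsto_nhdsWithin
    Real.tendsto_arctan_atTop).comp (Filter.tendsto_id.atTop_div_const ha0))
  have hbot := key Filter.atBot _ ((tendsto_nhds_of_tendsto_nhdsWithin
    Real.tendsto_arctan_atBot).comp (Filter.tendsto_id.atBot_div_const ha0))
  rw [integral_of_hasDerivAt_of_tendsto hd (integrable_planeSlice x) hbot htop, lineDens,
    Real.cos_arctan, ← ha, ← ha2, Real.cos_neg, Real.cos_pi_div_two]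
  have hpi := Real.pi_ne_zero
  field_simp
  ring

lemma map_re_planeMeasure : planeMeasure.map Complex.re = lineMeasure := by
  refine Measure.ext fun s hs => ?_
  have hm : MeasurableSet (Complex.re ⁻¹' s) := Complex.measurable_re hs
  rw [Measure.map_apply Complex.measurable_re hs, planeMeasure, lineMeasure,
    withDensity_apply _ hm, withDensity_apply _ hs, ← lintegral_indicator hm,
    ← lintegral_indicator hs,
    ← Complex.volume_preserving_equiv_real_prod.symm.lintegral_comp_emb
      Complex.measurableEquivRealProd.symm.measurableEmbedding, Measure.volume_eq_prod,
    lintegral_prod]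
  · refine lintegral_congr fun x => ?_
    by_cases hx : x ∈ s
    · simp only [Set.indicator, Set.mem_preimage, Complex.measurableEquivRealProd_symm_apply,
        hx, if_true]
      rw [← integral_planeSlice, ofReal_integral_eq_lintegral_ofReal (integrable_planeSlice x)
        (Filter.Eventually.of_forall fun y => by positivity)]
      rfl
    · simp [Set.indicator, hx]
  · exact (((continuous_planeDens.measurable.ennreal_ofReal).indicator hm).comp
      Complex.measurableEquivRealProd.symm.measurable).aemeasurable

lemma measurePreserving_isometry (L : ℂ ≃ₗᵢ[ℝ] ℂ) :
    MeasurePreserving L planeMeasure planeMeasure := by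
  refine ⟨L.continuous.measurable, Measure.ext fun s hs => ?_⟩
  have hm : MeasurableSet (L ⁻¹' s) := L.continuous.measurable hs
  rw [Measure.map_apply L.continuous.measurable hs, planeMeasure,
    withDensity_apply _ hm, withDensity_apply _ hs,
    ← L.measurePreserving.setLIntegral_comp_preimage_emb
      L.toMeasurableEquiv.measurableEmbedding _ s]
  refine setLIntegral_congr_fun hm fun z _ => ?_
  have h : ∀ w : ℂ, planeDens w = Real.pi⁻¹ * ((1 + ‖w‖ ^ 2) ^ 2)⁻¹ := by
    intro w
    rw [← Complex.normSq_eq_norm_sq, Complex.normSq_apply]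
    unfold planeDens; ring_nf
  simp only [h, L.norm_map]

lemma integral_lineMeasure (f : ℝ → ℝ) :
    ∫ x, f x ∂lineMeasure = ∫ x, lineDens x * f x := by
  rw [lineMeasure, integral_withDensity_eq_integral_toReal_smul
    continuous_lineDens.measurable.ennreal_ofReal (by simp)]
  simp [ENNReal.toReal_ofReal (lineDens_nonneg _)]

lemma integral_lineDens : ∫ x, lineDens x = 1 := by
  have hd : ∀ x, HasDerivAt (fun x => (1 / 2) * Real.sin (Real.arctan x)) (lineDens x) x := by
    intro x
    refine (((Real.hasDerivAt_arctan x).sin).const_mul (1 / 2)).congr_deriv ?_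
    unfold lineDens; ring
  have ht : ∀ (l : Filter ℝ) (t : ℝ), Filter.Tendsto Real.arctan l (nhds t) →
      Filter.Tendsto (fun x => (1 / 2) * Real.sin (Real.arctan x)) l
      (nhds ((1 / 2) * Real.sin t)) := fun l t h =>
    ((Real.continuous_sin.tendsto _).comp h).const_mul _
  rw [integral_of_hasDerivAt_of_tendsto hd integrable_lineDens
    (ht _ _ (tendsto_nhds_of_tendsto_nhdsWithin Real.tendsto_arctan_atBot))
    (ht _ _ (tendsto_nhds_of_tendsto_nhdsWithin Real.tendsto_arctan_atTop)), Real.sin_neg,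
    Real.sin_pi_div_two]
  norm_num

lemma integral_lineDens_mul : ∫ x, lineDens x * x = 0 := by
  have h : ∫ x, lineDens (-x) * (-x) = ∫ x, lineDens x * x :=
    integral_neg_eq_self (fun x => lineDens x * x) volume
  have e : ∀ x, lineDens (-x) * (-x) = -(lineDens x * x) := by
    intro x; simp [lineDens, Real.arctan_neg]
  simp only [e] at h
  rw [integral_neg] at h
  linarith

instance : IsProbabilityMeasure lineMeasure := by
  constructor
  rw [lineMeasure, withDensity_apply _ MeasurableSet.univ, Measure.restrict_univ,
    ← ofReal_integral_eq_lintegral_ofReal integrable_lineDens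
      (Filter.Eventually.of_forall lineDens_nonneg), integral_lineDens]
  simp

instance : IsProbabilityMeasure planeMeasure := by
  constructor
  have := measure_univ (μ := lineMeasure)
  rwa [← map_re_planeMeasure, Measure.map_apply Complex.measurable_re MeasurableSet.univ,
    Set.preimage_univ] at this

lemma integrable_id_lineMeasure : Integrable (fun x : ℝ => x) lineMeasure := by
  rw [lineMeasure, integrable_withDensity_iff_integrable_smul'
    continuous_lineDens.measurable.ennreal_ofReal (by simp)]
  simpa [ENNReal.toReal_ofReal (lineDens_nonneg _)] using
    integrable_lineDens_mul measurable_id abs_lineDens_mul_id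

lemma integrable_re : Integrable Complex.re planeMeasure := by
  have h := integrable_id_lineMeasure
  rw [← map_re_planeMeasure] at h
  exact h.comp_measurable Complex.measurable_re

lemma integrable_im : Integrable Complex.im planeMeasure := by
  have h := (measurePreserving_isometry (rotation (Circle.exp (-(Real.pi / 2))))).integrable_comp
    integrable_re.aestronglyMeasurable |>.2 integrable_re
  refine h.congr (Filter.Eventually.of_forall fun z => ?_)
  simp only [Function.comp, rotation_apply, Circle.coe_exp, Complex.mul_re,
    Complex.exp_ofReal_mul_I_re, Complex.exp_ofReal_mul_I_im]
  simp

/-! ### Moments of signs and positive parts of affine functions -/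

/-- The sign of a real number, with the value `-1` at zero. -/
def sg (t : ℝ) : ℝ := if 0 < t then 1 else -1

lemma measurable_sg : Measurable sg :=
  Measurable.ite measurableSet_Ioi measurable_const measurable_const

lemma abs_sg (t : ℝ) : |sg t| = 1 := by
  unfold sg; split_ifs <;> simp

lemma sin_cos_arctan_ratio {α ρ : ℝ} (hρ : 0 < ρ) :
    Real.sin (Real.arctan (-α / ρ)) = -α / √(ρ ^ 2 + α ^ 2) ∧
      Real.cos (Real.arctan (-α / ρ)) = ρ / √(ρ ^ 2 + α ^ 2) := by
  have h : √(1 + (-α / ρ) ^ 2) = √(ρ ^ 2 + α ^ 2) / ρ := by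
    rw [eq_div_iff hρ.ne']
    nth_rw 2 [← Real.sqrt_sq hρ.le]
    rw [← Real.sqrt_mul (by positivity)]
    congr 1
    field_simp
  have h0 : 0 < √(ρ ^ 2 + α ^ 2) := by positivity
  rw [Real.sin_arctan, Real.cos_arctan, h]
  constructor <;> field_simp

lemma line_pos {α ρ : ℝ} (hρ : 0 ≤ ρ) :
    ∫ x, max (α + ρ * x) 0 ∂lineMeasure = (√(ρ ^ 2 + α ^ 2) + α) / 2 := by
  rcases hρ.eq_or_lt with rfl | hρ
  · simp [Real.sqrt_sq_eq_abs]
    rcases le_total 0 α with h | h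
    · rw [max_eq_left h, abs_of_nonneg h]; ring
    · rw [max_eq_right h, abs_of_nonpos h]; ring
  obtain ⟨hs, hc⟩ := sin_cos_arctan_ratio (α := α) hρ
  have h0 : 0 < √(ρ ^ 2 + α ^ 2) := by positivity
  have h1 : √(ρ ^ 2 + α ^ 2) ^ 2 = ρ ^ 2 + α ^ 2 := Real.sq_sqrt (by positivity)
  have e : ∀ x, lineDens x * max (α + ρ * x) 0 =
      (Set.Ioi (-α / ρ)).indicator (fun x => α * lineDens x + ρ * (lineDens x * x)) x := by
    intro x
    have hx : x ∈ Set.Ioi (-α / ρ) ↔ 0 < α + ρ * x := by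
      rw [Set.mem_Ioi, div_lt_iff₀ hρ]; constructor <;> intro h <;> linarith
    by_cases h : 0 < α + ρ * x
    · rw [Set.indicator_of_mem (hx.2 h), max_eq_left h.le]; ring
    · rw [Set.indicator_of_notMem (mt hx.1 h), max_eq_right (not_lt.1 h), mul_zero]
  have i2 : Integrable (fun x => lineDens x * x) :=
    integrable_lineDens_mul measurable_id abs_lineDens_mul_id
  rw [integral_lineMeasure, integral_congr_ae (Filter.Eventually.of_forall e),
    integral_indicator measurableSet_Ioi, integral_add
      (integrable_lineDens.integrableOn.const_mul _) (i2.integrableOn.const_mul _),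
    integral_const_mul, integral_const_mul, integral_lineDens_Ioi, integral_lineDens_mul_Ioi, hs, hc]
  field_simp
  linear_combination -h1

lemma line_sg {α ρ : ℝ} (hρ : 0 ≤ ρ) (h1 : α ^ 2 + ρ ^ 2 = 1) :
    ∫ x, sg (α + ρ * x) ∂lineMeasure = α ∧ ∫ x, sg (α + ρ * x) * x ∂lineMeasure = ρ := by
  rcases hρ.eq_or_lt with rfl | hρ
  · have : α = 1 ∨ α = -1 := by
      have : (α - 1) * (α + 1) = 0 := by linarith
      rcases mul_eq_zero.1 this with h | h
      · left; linarith
      · right; linarith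
    have hx : ∫ x, x ∂lineMeasure = 0 := by rw [integral_lineMeasure, integral_lineDens_mul]
    rcases this with rfl | rfl
    · simp [sg, hx]
    · norm_num [sg]
      rw [integral_neg, hx, neg_zero]
  obtain ⟨hs, hc⟩ := sin_cos_arctan_ratio (α := α) hρ
  rw [add_comm, h1, Real.sqrt_one, div_one] at hs hc
  have e : ∀ x, sg (α + ρ * x) = 2 * (Set.Ioi (-α / ρ)).indicator (fun _ => 1) x - 1 := by
    intro x
    have hx : x ∈ Set.Ioi (-α / ρ) ↔ 0 < α + ρ * x := by
      rw [Set.mem_Ioi, div_lt_iff₀ hρ]; constructor <;> intro h <;> linarith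
    unfold sg
    by_cases h : 0 < α + ρ * x
    · rw [Set.indicator_of_mem (hx.2 h), if_pos h]; ring
    · rw [Set.indicator_of_notMem (mt hx.1 h), if_neg h]; ring
  have e1 : ∀ x, lineDens x * sg (α + ρ * x) =
      2 * (Set.Ioi (-α / ρ)).indicator lineDens x - lineDens x := by
    intro x; rw [e]; simp only [Set.indicator]; split_ifs <;> ring
  have e2 : ∀ x, lineDens x * (sg (α + ρ * x) * x) =
      2 * (Set.Ioi (-α / ρ)).indicator (fun x => lineDens x * x) x - lineDens x * x := by
    intro x; rw [e]; simp only [Set.indicator]; split_ifs <;> ring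
  have i2 : Integrable (fun x => lineDens x * x) :=
    integrable_lineDens_mul measurable_id abs_lineDens_mul_id
  rw [integral_lineMeasure, integral_lineMeasure]
  simp only [e1, e2]
  rw [integral_sub ((integrable_lineDens.indicator measurableSet_Ioi).const_mul _)
      integrable_lineDens,
    integral_sub ((i2.indicator measurableSet_Ioi).const_mul _) i2,
    integral_const_mul, integral_const_mul, integral_indicator measurableSet_Ioi,
    integral_indicator measurableSet_Ioi, integral_lineDens_Ioi, integral_lineDens_mul_Ioi,
    integral_lineDens, integral_lineDens_mul, hs, hc]
  constructor <;> ring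

lemma integral_comp_re {F : ℝ → ℝ} (hF : Measurable F) :
    ∫ z, F z.re ∂planeMeasure = ∫ x, F x ∂lineMeasure := by
  rw [← map_re_planeMeasure, integral_map Complex.measurable_re.aemeasurable
    hF.aestronglyMeasurable]

/-- Every linear functional on the plane is, up to a rotation, a nonnegative multiple of the
real part. -/
lemma exists_rotation (p q : ℝ) : ∃ (ρ cx cy : ℝ) (L : ℂ ≃ₗᵢ[ℝ] ℂ), 0 ≤ ρ ∧
    cx ^ 2 + cy ^ 2 = 1 ∧ p = ρ * cx ∧ q = ρ * cy ∧
    ∀ z, (L z).re = cx * z.re - cy * z.im ∧ (L z).im = cx * z.im + cy * z.re := by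
  have hp := Complex.norm_mul_cos_arg ⟨p, q⟩
  have hq := Complex.norm_mul_sin_arg ⟨p, q⟩
  set t := Complex.arg ⟨p, q⟩
  refine ⟨‖(⟨p, q⟩ : ℂ)‖, Real.cos t, Real.sin t, rotation (Circle.exp t), norm_nonneg _,
    Real.cos_sq_add_sin_sq t, hp.symm, hq.symm, fun z => ?_⟩
  simp [rotation_apply, Circle.coe_exp, Complex.exp_ofReal_mul_I_re, Complex.exp_ofReal_mul_I_im]

lemma integral_isometry (L : ℂ ≃ₗᵢ[ℝ] ℂ) (F : ℂ → ℝ) :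
    ∫ z, F (L z) ∂planeMeasure = ∫ z, F z ∂planeMeasure :=
  (measurePreserving_isometry L).integral_comp L.toMeasurableEquiv.measurableEmbedding F

lemma plane_pos (α p q : ℝ) :
    ∫ z, max (α + p * z.re + q * z.im) 0 ∂planeMeasure =
      (√(p ^ 2 + q ^ 2 + α ^ 2) + α) / 2 := by
  obtain ⟨ρ, cx, cy, L, hρ, h1, hp, hq, hL⟩ := exists_rotation p q
  rw [← integral_isometry L]
  have e : ∀ z, α + p * (L z).re + q * (L z).im = α + ρ * z.re := by
    intro z
    rw [(hL z).1, (hL z).2, hp, hq]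
    linear_combination ρ * z.re * h1
  simp only [e]
  rw [integral_comp_re (F := fun x => max (α + ρ * x) 0) (by fun_prop), line_pos hρ]
  congr 4
  rw [hp, hq]; linear_combination -ρ ^ 2 * h1

lemma integrable_sg_mul {f g : ℂ → ℝ} (hf : Measurable f) (hg : Integrable g planeMeasure) :
    Integrable (fun z => sg (f z) * g z) planeMeasure :=
  hg.bdd_mul (c := 1) (measurable_sg.comp hf).aestronglyMeasurable
    (Filter.Eventually.of_forall fun _ => (abs_sg _).le)

lemma plane_sg {α p q : ℝ} (h : p ^ 2 + q ^ 2 + α ^ 2 = 1) (β p' q' : ℝ) :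
    ∫ z, sg (α + p * z.re + q * z.im) * (β + p' * z.re + q' * z.im) ∂planeMeasure =
      α * β + p * p' + q * q' := by
  obtain ⟨ρ, cx, cy, L, hρ, h1, hp, hq, hL⟩ := exists_rotation p q
  rw [← integral_isometry L]
  have e : ∀ z, sg (α + p * (L z).re + q * (L z).im) * (β + p' * (L z).re + q' * (L z).im) =
      β * sg (α + ρ * z.re) + (p' * cx + q' * cy) * (sg (α + ρ * z.re) * z.re) +
        (q' * cx - p' * cy) * (sg (α + ρ * z.re) * z.im) := by
    intro z
    have : α + p * (L z).re + q * (L z).im = α + ρ * z.re := by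
      rw [(hL z).1, (hL z).2, hp, hq]
      linear_combination ρ * z.re * h1
    rw [this, (hL z).1, (hL z).2]
    ring
  have hm : Measurable fun z : ℂ => α + ρ * z.re := by
    have := Complex.measurable_re
    fun_prop
  have hρ1 : α ^ 2 + ρ ^ 2 = 1 := by
    rw [← h, hp, hq]; linear_combination -ρ ^ 2 * h1
  obtain ⟨l1, l2⟩ := line_sg hρ hρ1
  -- complex conjugation preserves the measure and flips the sign of this integrand
  have him : ∫ z, sg (α + ρ * z.re) * z.im ∂planeMeasure = 0 := by
    have := integral_isometry Complex.conjLIE (fun z => sg (α + ρ * z.re) * z.im)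
    simp only [Complex.conjLIE_apply, Complex.conj_re, Complex.conj_im, mul_neg,
      integral_neg] at this
    linarith
  have i0 : Integrable (fun z : ℂ => sg (α + ρ * z.re)) planeMeasure := by
    simpa using integrable_sg_mul hm (integrable_const (1 : ℝ))
  have i1 := integrable_sg_mul hm integrable_re
  have i2 := integrable_sg_mul hm integrable_im
  have i3 : Integrable (fun z : ℂ => β * sg (α + ρ * z.re) +
      (p' * cx + q' * cy) * (sg (α + ρ * z.re) * z.re)) planeMeasure :=
    (i0.const_mul _).add (i1.const_mul _)
  simp only [e]
  have hs := measurable_sg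
  rw [integral_add i3 (i2.const_mul _), integral_add (i0.const_mul _) (i1.const_mul _),
    integral_const_mul, integral_const_mul,
    integral_const_mul, him, integral_comp_re (F := fun x => sg (α + ρ * x)) (by fun_prop),
    integral_comp_re (F := fun x => sg (α + ρ * x) * x) (by fun_prop), l1, l2, hp, hq]
  ring

/-! ### The local part -/

lemma LocalFree.isBehaviour {M N : ℕ} {P : Bool → Bool → Fin M → Fin N → ℝ}
    (h : LocalFree P) : IsBehaviour P := by
  obtain ⟨n, q, A, B, hq, hq1, hA, hA1, hB, hB1, hP⟩ := h
  refine ⟨fun a b x y => ?_, fun x y => ?_⟩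
  · rw [hP]
    exact Finset.sum_nonneg fun l _ => mul_nonneg (mul_nonneg (hq l) (hA _ _ _)) (hB _ _ _)
  · have e : ∀ l, q l * A true x l * B true y l + q l * A true x l * B false y l +
        (q l * A false x l * B true y l + q l * A false x l * B false y l) = q l := by
      intro l
      have h1 := hA1 x l
      have h2 := hB1 y l
      rw [Fintype.sum_bool] at h1 h2
      linear_combination q l * (B true y l + B false y l) * h1 + q l * h2
    simp only [Fintype.sum_bool, hP, ← Finset.sum_add_distrib, e, hq1]

lemma sum_setIntegral_pattern {Ω : Type*} [MeasurableSpace Ω] {μ : Measure Ω} {M : ℕ}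
    {f : Fin M → Ω → Bool} (hf : ∀ x, Measurable (f x)) {F : Ω → ℝ} (hF : Integrable F μ) :
    ∑ σ : Fin M → Bool, ∫ ω in (fun ω x => f x ω) ⁻¹' {σ}, F ω ∂μ = ∫ ω, F ω ∂μ := by
  have hm : ∀ σ : Fin M → Bool, MeasurableSet ((fun ω x => f x ω) ⁻¹' {σ}) := fun σ =>
    measurable_pi_lambda _ hf (measurableSet_singleton σ)
  simp only [← integral_indicator (hm _)]
  rw [← integral_finsetSum _ fun σ _ => hF.indicator (hm σ)]
  refine integral_congr_ae (Filter.Eventually.of_forall fun ω => ?_)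
  simp [Set.indicator]

/-- A hidden variable `ω` with law `μ`, a deterministic response of the first party and a
stochastic response of the second one give a local-free behaviour. Since there are finitely many
settings, the hidden variable may be replaced by the finite pattern of all the answers of the first
party, the response of the second party being averaged over each pattern. -/
lemma localFree_of_hidden {Ω : Type*} [MeasurableSpace Ω] (μ : Measure Ω)
    [IsProbabilityMeasure μ] {M N : ℕ} (f : Fin M → Ω → Bool) (hf : ∀ x, Measurable (f x))
    (g : Bool → Fin N → Ω → ℝ) (hg : ∀ b y, Measurable (g b y)) (hg0 : ∀ b y ω, 0 ≤ g b y ω)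
    (hg1 : ∀ y ω, g true y ω + g false y ω = 1) :
    LocalFree (fun a b x y => ∫ ω, (if f x ω = a then 1 else 0) * g b y ω ∂μ) := by
  set S : (Fin M → Bool) → Set Ω := fun σ => (fun ω x => f x ω) ⁻¹' {σ} with hS
  have hm : ∀ σ : Fin M → Bool, MeasurableSet (S σ) := fun σ =>
    measurable_pi_lambda _ hf (measurableSet_singleton σ)
  have hgle : ∀ b y ω, g b y ω ≤ 1 := by
    intro b y ω
    have h0 := hg0 true y ω
    have h1 := hg0 false y ω
    have := hg1 y ω
    cases b <;> linarith
  have hgi : ∀ b y, Integrable (g b y) μ := fun b y =>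
    Integrable.of_bound (hg b y).aestronglyMeasurable 1 (Filter.Eventually.of_forall fun ω => by
      rw [Real.norm_of_nonneg (hg0 b y ω)]; exact hgle b y ω)
  let B : Bool → Fin N → (Fin M → Bool) → ℝ := fun b y σ =>
    if μ.real (S σ) = 0 then 1 / 2 else (∫ ω in S σ, g b y ω ∂μ) / μ.real (S σ)
  have hqB : ∀ b y σ, μ.real (S σ) * B b y σ = ∫ ω in S σ, g b y ω ∂μ := by
    intro b y σ
    by_cases h : μ.real (S σ) = 0
    · have h' : μ (S σ) = 0 := by
        rwa [Measure.real, ENNReal.toReal_eq_zero_iff, or_iff_left (measure_ne_top _ _)] at h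
      rw [h, zero_mul, Measure.restrict_eq_zero.2 h', integral_zero_measure]
    · simp only [B, if_neg h]
      field_simp
  let e := Fintype.equivFin (Fin M → Bool)
  refine ⟨Fintype.card (Fin M → Bool), fun l => μ.real (S (e.symm l)),
    fun a x l => if e.symm l x = a then 1 else 0, fun b y l => B b y (e.symm l),
    fun l => measureReal_nonneg, ?_, ?_, ?_, ?_, ?_, ?_⟩
  · rw [Equiv.sum_comp e.symm (fun σ => μ.real (S σ))]
    have := sum_setIntegral_pattern (μ := μ) hf (integrable_const (1 : ℝ))
    simpa using this
  · intro a x l; positivity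
  · intro x l; simp
  · intro b y l
    simp only [B]
    split_ifs
    · norm_num
    · exact div_nonneg (integral_nonneg fun ω => hg0 b y ω) measureReal_nonneg
  · intro y l
    simp only [B, Fintype.sum_bool]
    split_ifs with h
    · norm_num
    · rw [← add_div, ← integral_add (hgi _ _).integrableOn (hgi _ _).integrableOn]
      simp only [hg1]
      simp [h]
  · intro a b x y
    have hi : Integrable (fun ω => (if f x ω = a then (1 : ℝ) else 0) * g b y ω) μ := by
      refine (hgi b y).bdd_mul (c := 1) ?_ ?_
      · refine (Measurable.ite ?_ measurable_const measurable_const).aestronglyMeasurable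
        exact hf x (measurableSet_singleton a)
      · refine Filter.Eventually.of_forall fun ω => ?_
        split_ifs <;> simp
    beta_reduce
    rw [Equiv.sum_comp e.symm (fun σ => μ.real (S σ) * (if σ x = a then 1 else 0) * B b y σ),
      ← sum_setIntegral_pattern hf hi]
    refine Finset.sum_congr rfl fun σ _ => ?_
    rw [mul_right_comm, hqB, mul_comm, ← integral_const_mul]
    refine setIntegral_congr_fun (hm σ) fun ω hω => ?_
    have : f x ω = σ x := congrFun (by simpa [S] using hω) x
    simp only [this]

lemma euclidean_sq_sum {w : EuclideanSpace ℝ (Fin 3)} (h : ‖w‖ = 1) :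
    w 0 ^ 2 + w 1 ^ 2 + w 2 ^ 2 = 1 := by
  have := EuclideanSpace.real_norm_sq_eq w
  rw [h, Fin.sum_univ_three] at this
  linarith

/-- The response of the second party: the affine function `ℓ` divided by `c` and truncated to
`[-1, 1]`. It has mean `v₃`, since the two truncated tails have masses `(1 - c) (1 ± v₃) / 2`, and its
correlation with the sign response of the first party, scaled by `c`, is within the total tail mass
`1 - c` of the quantum correlator. -/
lemma truncated_response {c s : ℝ} (hc : 0 < c) (hcs : c ^ 2 + s ^ 2 = 1) {v0 v1 v2 : ℝ}
    (hv : v0 ^ 2 + v1 ^ 2 + v2 ^ 2 = 1) :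
    ∃ b : ℂ → ℝ, Measurable b ∧ (∀ z, |b z| ≤ 1) ∧ ∫ z, b z ∂planeMeasure = v2 ∧
      ∀ u0 u1 u2 : ℝ, u0 ^ 2 + u1 ^ 2 + u2 ^ 2 = 1 →
        |u2 * v2 + s * (u0 * v0 - u1 * v1) -
          c * ∫ z, sg (u2 + u0 * z.re + u1 * z.im) * b z ∂planeMeasure| ≤ 1 - c := by
  have hre := Complex.measurable_re
  have him := Complex.measurable_im
  have hc1 : c ≤ 1 := by nlinarith [sq_nonneg s]
  have hv2 : |v2| ≤ 1 := by
    rw [← sq_le_one_iff_abs_le_one]; nlinarith [sq_nonneg v0, sq_nonneg v1]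
  obtain ⟨hv2a, hv2b⟩ := abs_le.1 hv2
  -- the linear function whose correlation with the half-plane response is the quantum correlator
  let l : ℂ → ℝ := fun z => v2 + s * v0 * z.re + -s * v1 * z.im
  -- `m₁` and `m₂` are the parts of `l` above `c` and of `-l` above `c`, so that `l - m₁ + m₂` is `l`
  -- truncated to `[-c, c]`
  let m₁ : ℂ → ℝ := fun z => max (v2 - c + s * v0 * z.re + -s * v1 * z.im) 0
  let m₂ : ℂ → ℝ := fun z => max (-v2 - c + -s * v0 * z.re + s * v1 * z.im) 0
  have hli : Integrable l planeMeasure :=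
    ((integrable_const _).add (integrable_re.const_mul _)).add (integrable_im.const_mul _)
  have hm1 : Integrable m₁ planeMeasure := Integrable.pos_part
    (((integrable_const _).add (integrable_re.const_mul _)).add (integrable_im.const_mul _))
  have hm2 : Integrable m₂ planeMeasure := Integrable.pos_part
    (((integrable_const _).add (integrable_re.const_mul _)).add (integrable_im.const_mul _))
  have I1 : ∫ z, m₁ z ∂planeMeasure = (1 - c) * (1 + v2) / 2 := by
    have : (s * v0) ^ 2 + (-s * v1) ^ 2 + (v2 - c) ^ 2 = (1 - c * v2) ^ 2 := by
      linear_combination s ^ 2 * hv + (1 - v2 ^ 2) * hcs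
    simp only [m₁]
    rw [plane_pos, this, Real.sqrt_sq (by nlinarith)]
    ring
  have I2 : ∫ z, m₂ z ∂planeMeasure = (1 - c) * (1 - v2) / 2 := by
    have : (-s * v0) ^ 2 + (s * v1) ^ 2 + (-v2 - c) ^ 2 = (1 + c * v2) ^ 2 := by
      linear_combination s ^ 2 * hv + (1 - v2 ^ 2) * hcs
    simp only [m₂]
    rw [plane_pos, this, Real.sqrt_sq (by nlinarith)]
    ring
  have Il : ∫ z, l z ∂planeMeasure = v2 := by
    have := plane_sg (α := 1) (p := 0) (q := 0) (by norm_num) v2 (s * v0) (-s * v1)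
    simpa [sg, l] using this
  have hmeas : Measurable fun z => (l z - m₁ z + m₂ z) / c := by
    simp only [l, m₁, m₂]; fun_prop
  have hm1e : ∀ z, m₁ z = max (l z - c) 0 := fun z => by
    simp only [l, m₁]; congr 1; ring
  have hm2e : ∀ z, m₂ z = max (-l z - c) 0 := fun z => by
    simp only [l, m₂]; congr 1; ring
  have hb : ∀ z, |(l z - m₁ z + m₂ z) / c| ≤ 1 := by
    intro z
    rw [abs_div, abs_of_pos hc, div_le_one hc, hm1e, hm2e, abs_le]
    constructor <;> rcases max_cases (l z - c) 0 with h | h <;>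
      rcases max_cases (-l z - c) 0 with h' | h' <;> linarith
  refine ⟨fun z => (l z - m₁ z + m₂ z) / c, hmeas, hb, ?_, ?_⟩
  · have i3 : Integrable (fun z => l z - m₁ z) planeMeasure := hli.sub hm1
    rw [integral_div, integral_add i3 hm2, integral_sub hli hm1, I1, I2, Il]
    field_simp
    ring
  · intro u0 u1 u2 hu
    have hum : Measurable fun z : ℂ => u2 + u0 * z.re + u1 * z.im := by fun_prop
    have E : ∫ z, sg (u2 + u0 * z.re + u1 * z.im) * l z ∂planeMeasure =
        u2 * v2 + s * (u0 * v0 - u1 * v1) := by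
      simp only [l]
      rw [plane_sg hu]; ring
    have i1 := integrable_sg_mul hum hli
    have hbi : Integrable (fun z => (l z - m₁ z + m₂ z) / c) planeMeasure :=
      ((hli.sub hm1).add hm2).div_const c
    have i2 := (integrable_sg_mul hum hbi).const_mul c
    rw [← E, ← integral_const_mul, ← integral_sub i1 i2]
    have hbound : ∀ z, ‖sg (u2 + u0 * z.re + u1 * z.im) * l z -
        c * (sg (u2 + u0 * z.re + u1 * z.im) * ((l z - m₁ z + m₂ z) / c))‖ ≤ m₁ z + m₂ z := by
      intro z
      have : sg (u2 + u0 * z.re + u1 * z.im) * l z -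
        c * (sg (u2 + u0 * z.re + u1 * z.im) * ((l z - m₁ z + m₂ z) / c)) =
        sg (u2 + u0 * z.re + u1 * z.im) * (m₁ z - m₂ z) := by field_simp; ring
      have h1 : 0 ≤ m₁ z := le_max_right _ _
      have h2 : 0 ≤ m₂ z := le_max_right _ _
      rw [this, Real.norm_eq_abs, abs_mul, abs_sg, one_mul, abs_le]
      constructor <;> linarith
    refine (norm_integral_le_of_norm_le (hm1.add hm2)
      (Filter.Eventually.of_forall hbound)).trans ?_
    have : ∫ z, (m₁ + m₂) z ∂planeMeasure = 1 - c := by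
      rw [integral_add' hm1 hm2, I1, I2]; ring
    exact this.le

/-- The quantum behaviour dominates `cos θ` times a local-free behaviour. Given the marginals `u₃`,
`v₃` and the correlator bound of `truncated_response`, each of the four inequalities is linear. -/
lemma exists_local_part {M N : ℕ} {θ : ℝ} (hc : 0 < Real.cos θ)
    {u : Fin M → EuclideanSpace ℝ (Fin 3)} {v : Fin N → EuclideanSpace ℝ (Fin 3)}
    (hu : ∀ x, ‖u x‖ = 1) (hv : ∀ y, ‖v y‖ = 1) :
    ∃ PL : Bool → Bool → Fin M → Fin N → ℝ, LocalFree PL ∧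
      ∀ a b x y, Real.cos θ * PL a b x y ≤ qBehaviour θ u v a b x y := by
  have hre := Complex.measurable_re
  have him := Complex.measurable_im
  choose β hβm hβ1 hβi hβE using fun y =>
    truncated_response hc (Real.cos_sq_add_sin_sq θ) (euclidean_sq_sum (hv y))
  let f : Fin M → ℂ → Bool := fun x z => 
    if 0 < u x 2 + u x 0 * z.re + u x 1 * z.im then true else false
  have hum : ∀ x, Measurable fun z : ℂ => u x 2 + u x 0 * z.re + u x 1 * z.im := by
    intro x; fun_prop
  refine ⟨_, localFree_of_hidden planeMeasure f ?_
    (fun b y z => (1 + outVal b * β y z) / 2) ?_ ?_ ?_, ?_⟩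
  · intro x
    exact Measurable.ite (measurableSet_lt measurable_const (hum x)) measurable_const
      measurable_const
  · intro b y
    have := hβm y
    fun_prop
  · intro b y z
    have := abs_le.1 (hβ1 y z)
    cases b <;> simp [outVal] <;> linarith
  · intro y z
    simp [outVal]; ring
  · intro a b x y
    have e : ∀ z, (if f x z = a then (1 : ℝ) else 0) * ((1 + outVal b * β y z) / 2) =
        1 / 4 + outVal a / 4 * sg (u x 2 + u x 0 * z.re + u x 1 * z.im) +
          (outVal b / 4 * β y z + outVal a * outVal b / 4 *
          (sg (u x 2 + u x 0 * z.re + u x 1 * z.im) * β y z)) := by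
      intro z
      have : (if f x z = a then (1 : ℝ) else 0) =
          (1 + outVal a * sg (u x 2 + u x 0 * z.re + u x 1 * z.im)) / 2 := by
        by_cases h : 0 < u x 2 + u x 0 * z.re + u x 1 * z.im <;> cases a <;>
          simp [f, sg, outVal, h]
      rw [this]; ring
    have hβI : Integrable (β y) planeMeasure :=
      Integrable.of_bound (hβm y).aestronglyMeasurable 1
        (Filter.Eventually.of_forall (hβ1 y))
    have i0 : Integrable (fun z : ℂ => sg (u x 2 + u x 0 * z.re + u x 1 * z.im)) planeMeasure := by
      simpa using integrable_sg_mul (hum x) (integrable_const (1 : ℝ))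
    have i1 := integrable_sg_mul (hum x) hβI
    have hs : ∫ z, sg (u x 2 + u x 0 * z.re + u x 1 * z.im) ∂planeMeasure = u x 2 := by
      simpa using plane_sg (euclidean_sq_sum (hu x)) 1 0 0
    have key := abs_le.1 (hβE y _ _ _ (euclidean_sq_sum (hu x)))
    have i2 : Integrable (fun z : ℂ => 1 / 4 + outVal a / 4 *
        sg (u x 2 + u x 0 * z.re + u x 1 * z.im)) planeMeasure :=
      (integrable_const _).add (i0.const_mul _)
    have i3 : Integrable (fun z : ℂ => outVal b / 4 * β y z + outVal a * outVal b / 4 *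
        (sg (u x 2 + u x 0 * z.re + u x 1 * z.im) * β y z)) planeMeasure :=
      (hβI.const_mul _).add (i1.const_mul _)
    simp only [e]
    rw [integral_add i2 i3,
      integral_add (integrable_const _) (i0.const_mul _),
      integral_add (hβI.const_mul _) (i1.const_mul _), integral_const_mul, integral_const_mul,
      integral_const_mul, hs, hβi]
    set I := ∫ z, sg (u x 2 + u x 0 * z.re + u x 1 * z.im) * β y z ∂planeMeasure
    simp only [integral_const, probReal_univ, one_smul, qBehaviour]
    obtain ⟨k1, k2⟩ := key
    cases a <;> cases b <;> simp [outVal] <;> linarith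

lemma sum_qBehaviour {M N : ℕ} (θ : ℝ) (u : Fin M → EuclideanSpace ℝ (Fin 3))
    (v : Fin N → EuclideanSpace ℝ (Fin 3)) (x : Fin M) (y : Fin N) :
    ∑ a, ∑ b, qBehaviour θ u v a b x y = 1 := by
  simp [qBehaviour, outVal]; ring

/-- A pointwise minorant `p * PL ≤ P` is completed by a behaviour to a convex decomposition. -/
lemma exists_complement {M N : ℕ} {P PL : Bool → Bool → Fin M → Fin N → ℝ} {p : ℝ}
    (hp1 : p ≤ 1) (hPL : IsBehaviour PL) (hP : ∀ x y, ∑ a, ∑ b, P a b x y = 1)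
    (hle : ∀ a b x y, p * PL a b x y ≤ P a b x y) :
    ∃ Q, IsBehaviour Q ∧ ∀ a b x y, P a b x y = p * PL a b x y + (1 - p) * Q a b x y := by
  rcases hp1.eq_or_lt with rfl | hp
  · refine ⟨PL, hPL, fun a b x y => ?_⟩
    have h1 := hP x y
    have h2 := hPL.2 x y
    simp only [Fintype.sum_bool] at h1 h2
    have k1 := hle true true x y
    have k2 := hle true false x y
    have k3 := hle false true x y
    have k4 := hle false false x y
    cases a <;> cases b <;> linarith
  · have hp' : 0 < 1 - p := by linarith
    refine ⟨fun a b x y => (P a b x y - p * PL a b x y) / (1 - p),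
      ⟨fun a b x y => div_nonneg (by linarith [hle a b x y]) hp'.le, fun x y => ?_⟩,
      fun a b x y => ?_⟩
    · have h1 := hP x y
      have h2 := hPL.2 x y
      simp only [Fintype.sum_bool] at h1 h2 ⊢
      field_simp
      linear_combination h1 - p * h2
    · field_simp
      ring

/-! ### The chained Bell inequality -/

/-- The probability of unequal outcomes. -/
def diffProb {M N : ℕ} (P : Bool → Bool → Fin M → Fin N → ℝ) (x : Fin M) (y : Fin N) : ℝ :=
  P true false x y + P false true x y

lemma diff_triangle {α β γ : ℝ} (hα : 0 ≤ α) (hα' : α ≤ 1) (hβ : 0 ≤ β) (hβ' : β ≤ 1)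
    (hγ : 0 ≤ γ) (hγ' : γ ≤ 1) :
    α * (1 - γ) + (1 - α) * γ ≤
      α * (1 - β) + (1 - α) * β + (β * (1 - γ) + (1 - β) * γ) := by
  have h1 : 0 ≤ β * ((1 - α) * (1 - γ)) :=
    mul_nonneg hβ (mul_nonneg (by linarith) (by linarith))
  have h2 : 0 ≤ (1 - β) * (α * γ) := mul_nonneg (by linarith) (mul_nonneg hα hγ)
  nlinarith

/-- Four-point inequality: unequal outcomes along `x, y, x', y'` obey the triangle inequality
in every local-free behaviour. -/
lemma LocalFree.diffProb_le {M N : ℕ} {P : Bool → Bool → Fin M → Fin N → ℝ}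
    (h : LocalFree P) (x x' : Fin M) (y y' : Fin N) :
    diffProb P x y' ≤ diffProb P x y + diffProb P x' y + diffProb P x' y' := by
  obtain ⟨n, q, A, B, hq, hq1, hA, hA1, hB, hB1, hP⟩ := h
  simp only [diffProb, hP, ← Finset.sum_add_distrib]
  refine Finset.sum_le_sum fun l _ => ?_
  have a1 := hA1 x l
  have a2 := hA1 x' l
  have b1 := hB1 y l
  have b2 := hB1 y' l
  have a0 := hA false x l
  have a0' := hA false x' l
  have b0 := hB false y l
  have b0' := hB false y' l
  rw [Fintype.sum_bool] at a1 a2 b1 b2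
  rw [← eq_sub_iff_add_eq'] at a1 a2 b1 b2
  rw [a1] at a0 ⊢
  rw [a2] at a0' ⊢
  rw [b1] at b0 ⊢
  rw [b2] at b0' ⊢
  have t1 := diff_triangle (hA true x l) (by linarith) (hB true y l) (by linarith)
    (hB true y' l) (by linarith)
  have t2 := diff_triangle (hB true y l) (by linarith) (hA true x' l) (by linarith)
    (hB true y' l) (by linarith)
  have := mul_le_mul_of_nonneg_left (add_le_add t1 t2) (hq l)
  linarith

/-- Chained Bell inequality for a chain of directions `W 0, …, W (2m+1)` in the `xz`-plane,
measured alternately by the two parties, whose endpoints are never found equal. -/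
lemma chain_bound {θ p : ℝ} (hp0 : 0 ≤ p) (hp1 : p ≤ 1) (m : ℕ)
    (W : ℕ → EuclideanSpace ℝ (Fin 3)) (hW : ∀ k, W k 1 = 0)
    (hend : 1 + W 0 2 * W (2 * m + 1) 2 + Real.sin θ * (W 0 0 * W (2 * m + 1) 0) = 0)
    {PL Q : Bool → Bool → Fin (m + 1) → Fin (m + 1) → ℝ} (hL : LocalFree PL)
    (hQ : IsBehaviour Q)
    (hdec : ∀ a b x y, qBehaviour θ (fun i : Fin (m + 1) => W (2 * i))
      (fun j : Fin (m + 1) => W (2 * j + 1)) a b x y = p * PL a b x y + (1 - p) * Q a b x y) :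
    p ≤ ∑ k ∈ Finset.range (2 * m + 1),
      (1 - W k 2 * W (k + 1) 2 - Real.sin θ * (W k 0 * W (k + 1) 0)) / 2 := by
  have hle : ∀ a b x y, p * PL a b x y ≤ qBehaviour θ (fun i : Fin (m + 1) => W (2 * i))
      (fun j : Fin (m + 1) => W (2 * j + 1)) a b x y := by
    intro a b x y
    rw [hdec]
    have := mul_nonneg (sub_nonneg.2 hp1) (hQ.1 a b x y)
    linarith
  have hD : ∀ x y : Fin (m + 1), p * diffProb PL x y ≤
      (1 - W (2 * x) 2 * W (2 * y + 1) 2 - Real.sin θ * (W (2 * x) 0 * W (2 * y + 1) 0)) / 2 := by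
    intro x y
    have h1 := hle true false x y
    have h2 := hle false true x y
    simp [qBehaviour, outVal, hW] at h1 h2
    unfold diffProb
    linarith
  have hsum : ∀ j (hj : j < m + 1), p * diffProb PL 0 ⟨j, hj⟩ ≤
      ∑ k ∈ Finset.range (2 * j + 1),
        (1 - W k 2 * W (k + 1) 2 - Real.sin θ * (W k 0 * W (k + 1) 0)) / 2 := by
    intro j
    induction j with
    | zero =>
      intro hj
      have := hD 0 ⟨0, hj⟩
      simpa using this
    | succ j ih =>
      intro hj
      have h0 := ih (by omega)
      have h1 := hD ⟨j + 1, hj⟩ ⟨j, by omega⟩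
      have h2 := hD ⟨j + 1, hj⟩ ⟨j + 1, hj⟩
      have h3 := mul_le_mul_of_nonneg_left
        (hL.diffProb_le 0 ⟨j + 1, hj⟩ ⟨j, by omega⟩ ⟨j + 1, hj⟩) hp0
      rw [show 2 * (j + 1) + 1 = 2 * j + 1 + 1 + 1 by ring, Finset.sum_range_succ,
        Finset.sum_range_succ]
      rw [show 2 * (j + 1) = 2 * j + 1 + 1 by ring] at h1 h2
      linarith
  refine le_trans ?_ (hsum m (Nat.lt_succ_self m))
  have h1 := hle true true 0 ⟨m, Nat.lt_succ_self m⟩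
  have h2 := hle false false 0 ⟨m, Nat.lt_succ_self m⟩
  have h3 := hL.isBehaviour.2 0 ⟨m, Nat.lt_succ_self m⟩
  simp [qBehaviour, outVal, hW] at h1 h2
  simp only [Fintype.sum_bool] at h3
  unfold diffProb
  have h4 : p * (PL true true 0 ⟨m, Nat.lt_succ_self m⟩ +
    PL false false 0 ⟨m, Nat.lt_succ_self m⟩) ≤ 0 := by linarith
  have h5 := congrArg (p * ·) h3
  linarith

/-! ### A chain of directions from pole to pole -/

/-- Stereographic parameters of the chain: `0` at the north pole, then a geometric progression of
ratio `r` from `r^(1-m)` to `r^m`. -/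
def chainParam (r : ℝ) (m k : ℕ) : ℝ := if k = 0 then 0 else r ^ k / r ^ m

/-- Directions of the chain, from the north pole (`k = 0`) to the south pole (`k = 2m+1`) along a
meridian. -/
def chainDir (r : ℝ) (m k : ℕ) : EuclideanSpace ℝ (Fin 3) :=
  if k = 2 * m + 1 then !₂[0, 0, -1] else
    !₂[2 * chainParam r m k / (1 + chainParam r m k ^ 2), 0,
      (1 - chainParam r m k ^ 2) / (1 + chainParam r m k ^ 2)]

lemma norm_chainDir (r : ℝ) (m k : ℕ) : ‖chainDir r m k‖ = 1 := by
  have h : ‖chainDir r m k‖ ^ 2 = 1 := by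
    rw [EuclideanSpace.real_norm_sq_eq, Fin.sum_univ_three, chainDir]
    split_ifs
    · simp
    · have : 1 + chainParam r m k ^ 2 ≠ 0 := by positivity
      simp
      field_simp
      ring
  exact (pow_eq_one_iff_of_nonneg (norm_nonneg _) two_ne_zero).1 h

lemma chainDir_one (r : ℝ) (m k : ℕ) : chainDir r m k 1 = 0 := by
  rw [chainDir]; split_ifs <;> simp

/-- The cost of the whole chain: away from the poles it telescopes, with the factor `κ`, in
`t² / (1 + t²)`; the two polar steps cost at most `r² / r^(2m)` and `1 / r^(2m)`. -/
lemma chain_cost {r s : ℝ} (hr : 1 < r) (hs : s ≤ 1) (m : ℕ) (hm : 0 < m) :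
    ∑ k ∈ Finset.range (2 * m + 1), (1 - chainDir r m k 2 * chainDir r m (k + 1) 2 -
      s * (chainDir r m k 0 * chainDir r m (k + 1) 0)) / 2 ≤
      (r ^ 2 + 1 - 2 * r * s) / (r ^ 2 - 1) + ((r * (r ^ m)⁻¹) ^ 2 + (r ^ m)⁻¹ ^ 2) := by
  set κ := (r ^ 2 + 1 - 2 * r * s) / (r ^ 2 - 1) with hκ
  have hr0 : 0 < r := by linarith
  have hr2 : 0 < r ^ 2 - 1 := by nlinarith
  have hκ0 : 0 ≤ κ := div_nonneg (by nlinarith [sq_nonneg (r - 1)]) hr2.le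
  let S : ℕ → ℝ := fun k => chainParam r m k ^ 2 / (1 + chainParam r m k ^ 2)
  have hS0 : ∀ k, 0 ≤ S k := fun k => by simp only [S]; positivity
  have hS1 : ∀ k, S k ≤ 1 := fun k => by
    simp only [S]; rw [div_le_one (by positivity)]; linarith
  have step : ∀ k, k + 1 ≠ 2 * m + 1 → k ≠ 2 * m + 1 →
      (1 - chainDir r m k 2 * chainDir r m (k + 1) 2 -
      s * (chainDir r m k 0 * chainDir r m (k + 1) 0)) / 2 =
      (chainParam r m k ^ 2 + chainParam r m (k + 1) ^ 2 -
        2 * s * chainParam r m k * chainParam r m (k + 1)) /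
        ((1 + chainParam r m k ^ 2) * (1 + chainParam r m (k + 1) ^ 2)) := by
    intro k h1 h2
    have e1 : 1 + chainParam r m k ^ 2 ≠ 0 := by positivity
    have e2 : 1 + chainParam r m (k + 1) ^ 2 ≠ 0 := by positivity
    simp only [chainDir, if_neg h1, if_neg h2]
    simp
    field_simp
    ring
  have partial_sum : ∀ n, n + 1 ≤ 2 * m → ∑ k ∈ Finset.range (n + 1),
      (1 - chainDir r m k 2 * chainDir r m (k + 1) 2 -
      s * (chainDir r m k 0 * chainDir r m (k + 1) 0)) / 2 = S 1 + κ * (S (n + 1) - S 1) := by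
    intro n
    induction n with
    | zero =>
      intro hn
      rw [Finset.sum_range_one, step 0 (by omega) (by omega)]
      simp [S, chainParam]
    | succ n ih =>
      intro hn
      rw [Finset.sum_range_succ, ih (by omega), step (n + 1) (by omega) (by omega)]
      have hp : chainParam r m (n + 1 + 1) = r * chainParam r m (n + 1) := by
        simp [chainParam]; ring
      simp only [S, hp, hκ]
      set t := chainParam r m (n + 1)
      set t1 := chainParam r m 1
      have e1 : 1 + t ^ 2 ≠ 0 := by positivity
      have e2 : 1 + (r * t) ^ 2 ≠ 0 := by positivity
      have e3 := hr2.ne'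
      have : (t ^ 2 + (r * t) ^ 2 - 2 * s * t * (r * t)) / ((1 + t ^ 2) * (1 + (r * t) ^ 2)) =
          (r ^ 2 + 1 - 2 * r * s) / (r ^ 2 - 1) *
            ((r * t) ^ 2 / (1 + (r * t) ^ 2) - t ^ 2 / (1 + t ^ 2)) := by
        field_simp
        ring
      rw [this]; ring
  obtain ⟨n, hn⟩ : ∃ n, 2 * m = n + 1 := ⟨2 * m - 1, by omega⟩
  have hps := partial_sum n hn.ge
  rw [← hn] at hps
  rw [Finset.sum_range_succ, hps]
  have hrm : 0 < r ^ m := by positivity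
  have ht : chainParam r m (2 * m) = r ^ m := by
    rw [chainParam, if_neg (by omega), two_mul, pow_add]; field_simp
  have hlast : (1 - chainDir r m (2 * m) 2 * chainDir r m (2 * m + 1) 2 -
      s * (chainDir r m (2 * m) 0 * chainDir r m (2 * m + 1) 0)) / 2 ≤ (r ^ m)⁻¹ ^ 2 := by
    have h1 : 2 * m ≠ 2 * m + 1 := by omega
    have h2 : (1 - chainDir r m (2 * m) 2 * chainDir r m (2 * m + 1) 2 -
        s * (chainDir r m (2 * m) 0 * chainDir r m (2 * m + 1) 0)) / 2 =
        (1 + (r ^ m) ^ 2)⁻¹ := by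
      simp only [chainDir, if_neg h1, if_true, ht]
      simp
      field_simp
      ring
    rw [h2, inv_pow]
    exact inv_anti₀ (by positivity) (by linarith)
  have hfirst : S 1 ≤ (r * (r ^ m)⁻¹) ^ 2 := by
    have h1 : chainParam r m 1 = r * (r ^ m)⁻¹ := by simp [chainParam]; rfl
    simp only [S, h1]
    exact div_le_self (by positivity) (by nlinarith [sq_nonneg (r * (r ^ m)⁻¹)])
  have hmid : κ * (S (2 * m) - S 1) ≤ κ :=
    mul_le_of_le_one_right hκ0 (by linarith [hS0 1, hS1 (2 * m)])
  linarith

/-! ### The fraction -/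

theorem qstate_fraction_eq_cos (θ : ℝ) (hθ : θ ∈ Set.Icc (0 : ℝ) (Real.pi / 2)) :
    sInf {m : ℝ | ∃ (M N : ℕ), 0 < M ∧ 0 < N ∧
      ∃ (u : Fin M → EuclideanSpace ℝ (Fin 3)) (v : Fin N → EuclideanSpace ℝ (Fin 3)),
        (∀ x, ‖u x‖ = 1) ∧ (∀ y, ‖v y‖ = 1) ∧
        m = sSup {p : ℝ | p ∈ Set.Icc (0 : ℝ) 1 ∧
          ∃ PL Q : Bool → Bool → Fin M → Fin N → ℝ,
            IsBehaviour PL ∧ LocalFree PL ∧ IsBehaviour Q ∧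
            ∀ a b x y, qBehaviour θ u v a b x y = p * PL a b x y + (1 - p) * Q a b x y}}
      = Real.cos θ := by
  have hc0 : 0 ≤ Real.cos θ := Real.cos_nonneg_of_mem_Icc
    ⟨by linarith [hθ.1, Real.pi_pos], hθ.2⟩
  have hs0 : 0 ≤ Real.sin θ := Real.sin_nonneg_of_nonneg_of_le_pi hθ.1
    (by linarith [hθ.2, Real.pi_pos])
  have hc1 := Real.cos_le_one θ
  have hs1 := Real.sin_le_one θ
  have hcs := Real.cos_sq_add_sin_sq θ
  set T : Set ℝ := _
  show sInf T = _
  have hlow : ∀ x ∈ T, Real.cos θ ≤ x := by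
    rintro _ ⟨M, N, _, _, u, v, hu, hv, rfl⟩
    rcases hc0.eq_or_lt with h0 | h0
    · rw [← h0]
      exact Real.sSup_nonneg fun p hp => hp.1.1
    · obtain ⟨PL, hPL, hle⟩ := exists_local_part h0 hu hv
      obtain ⟨Q, hQ, hdec⟩ := exists_complement hc1 hPL.isBehaviour (sum_qBehaviour θ u v) hle
      exact le_csSup ⟨1, fun p hp => hp.1.2⟩ ⟨⟨hc0, hc1⟩, PL, Q, hPL.isBehaviour, hPL, hQ, hdec⟩
  have hbdd : BddBelow T := ⟨_, hlow⟩
  have hchain : ∀ r : ℝ, 1 < r → ∀ m : ℕ, 0 < m → ∃ x ∈ T, x ≤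
      (r ^ 2 + 1 - 2 * r * Real.sin θ) / (r ^ 2 - 1) +
        ((r * (r ^ m)⁻¹) ^ 2 + (r ^ m)⁻¹ ^ 2) := by
    intro r hr m hm
    refine ⟨_, ⟨m + 1, m + 1, Nat.succ_pos m, Nat.succ_pos m,
      fun i => chainDir r m (2 * i), fun j => chainDir r m (2 * j + 1),
      fun _ => norm_chainDir _ _ _, fun _ => norm_chainDir _ _ _, rfl⟩, ?_⟩
    refine Real.sSup_le ?_ ?_
    · rintro p ⟨hp, PL, Q, _, hL, hQ, hdec⟩
      refine (chain_bound hp.1 hp.2 m (chainDir r m) (chainDir_one r m) ?_ hL hQ hdec).trans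
        (chain_cost hr hs1 m hm)
      simp [chainDir, chainParam]
    · have : 0 ≤ (r ^ 2 + 1 - 2 * r * Real.sin θ) / (r ^ 2 - 1) :=
        div_nonneg (by nlinarith [sq_nonneg (r - 1)]) (by nlinarith)
      positivity
  have hne : T.Nonempty := by
    obtain ⟨x, hx, _⟩ := hchain 2 (by norm_num) 1 one_pos
    exact ⟨x, hx⟩
  have hup : ∀ r : ℝ, 1 < r → sInf T ≤ (r ^ 2 + 1 - 2 * r * Real.sin θ) / (r ^ 2 - 1) := by
    intro r hr
    have h0 : Filter.Tendsto (fun m : ℕ => (r ^ m)⁻¹) Filter.atTop (nhds 0) :=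
      (tendsto_pow_atTop_atTop_of_one_lt hr).inv_tendsto_atTop
    have h1 := ((((h0.const_mul r).pow 2).add (h0.pow 2)).const_add
      ((r ^ 2 + 1 - 2 * r * Real.sin θ) / (r ^ 2 - 1)))
    simp only [mul_zero, ne_eq, OfNat.ofNat_ne_zero, not_false_eq_true, zero_pow, add_zero] at h1
    refine ge_of_tendsto h1 ((Filter.eventually_gt_atTop 0).mono fun m hm => ?_)
    obtain ⟨x, hx, hxle⟩ := hchain r hr m hm
    exact (csInf_le hbdd hx).trans hxle
  refine le_antisymm ?_ (le_csInf hne hlow)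
  rcases hs0.eq_or_lt with h0 | h0
  · -- a product state: the fraction never exceeds one
    have hcos : Real.cos θ = 1 := by
      rw [← h0] at hcs; nlinarith
    obtain ⟨x, hx⟩ := hne
    refine (csInf_le hbdd hx).trans ?_
    obtain ⟨M, N, _, _, u, v, _, _, rfl⟩ := hx
    rw [hcos]
    exact Real.sSup_le (fun p hp => hp.1.2) zero_le_one
  rcases hc0.eq_or_lt with hc | hc
  · -- the maximally entangled state: the bound is `(r - 1) / (r + 1)`, and `r` tends to one
    have hsin : Real.sin θ = 1 := by
      rw [← hc] at hcs; nlinarith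
    rw [← hc]
    refine le_of_forall_pos_le_add fun ε hε => ?_
    refine (hup (1 + ε) (by linarith)).trans ?_
    rw [hsin, zero_add, div_le_iff₀ (by nlinarith)]
    nlinarith [mul_pos hε hε, mul_pos hε (mul_pos hε hε)]
  · -- the ratio minimising the bound
    have hr : 1 < (1 + Real.cos θ) / Real.sin θ := by
      rw [lt_div_iff₀ h0]; linarith
    refine (hup _ hr).trans_eq ?_
    have h2 : ((1 + Real.cos θ) / Real.sin θ) ^ 2 - 1 =
        2 * Real.cos θ * (1 + Real.cos θ) / Real.sin θ ^ 2 := by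
      field_simp
      linear_combination -hcs
    rw [h2]
    field_simp
    linear_combination (-1 - 2 * Real.cos θ) * hcs
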